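/- Write $\overline{\mathbb R}=[-\infty,\infty]$, with the conventions $0\cdot\infty=0$ and $\infty+(-\infty)=(-\infty)+\infty=\infty$. An *outer probability content* on a set $Y$ is a functional $\mathcal E$ assigning to every function $f:Y\to\overline{\mathbb R}$ a value $\mathcal E(f)\in\overline{\mathbb R}$ such that (1) $\mathcal E(f)\le\mathcal E(g)$ whenever $f\le g$ pointwise; (2) $\mathcal E(cf)=c\,\mathcal E(f)$ for every real $c>0$; (3) $\mathcal E(f+g)\le\mathcal E(f)+\mathcal E(g)$; (4) $\mathcal E(c)=c$ for every real constant function $c$. Let $X$ be a nonempty set and let $\mathcal E_1,\mathcal E_2,\dots$ be outer probability contents on $X$. Let $\Omega=X^\infty$ be the set of infinite sequences of elements of $X$, let $X^*$ be the set of finite sequences (*situations*), for $s\in X^*$ let $\Gamma(s)\subseteq\Omega$ be the set of infinite sequences extending $s$, and let $\omega^n$ be the prefix of length $n$ of $\omega\in\Omega$. A *supermartingale* is a function $S:X^*\to\overline{\mathbb R}$ such that $\mathcal E_n(x\mapsto S(sx))\le S(s)$ for every $n\ge1$ and every situation $s$ of length $n-1$; it is *bounded below* if there is a real $C$ with $S\ge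 C$ everywhere. For $\xi:\Omega\to\overline{\mathbb R}$ and a situation $s$ put $$\overline{\mathbb E}(\xi\mid s):=\inf\Bigl\{S(s)\;:\;S\text{ a bounded below supermartingale with }\liminf_{n\to\infty}S(\omega^n)\ge\xi(\omega)\text{ for all }\omega\in\Gamma(s)\Bigr\}.$$ Then, for every situation $s$, the functional $\xi\mapsto\overline{\mathbb E}(\xi\mid s)$, defined on all functions $\xi:\Omega\to\overline{\mathbb R}$, is an outer probability content on $\Omega$; that is, it is monotone ($\overline{\mathbb E}(\xi\mid s)\le\overline{\mathbb E}(\eta\mid s)$ whenever $\xi\le\eta$ pointwise), positively homogeneous ($\overline{\mathbb E}(c\xi\mid s)=c\,\overline{\mathbb E}(\xi\mid s)$ for every real $c>0$), subadditive ($\overline{\mathbb E}(\xi+\eta\mid s)\le\overline{\mathbb E}(\xi\mid s)+\overline{\mathbb E}(\eta\mid s)$), and satisfies $\overline{\mathbb E}(c\mid s)=c$ for every real constant function $c$. -/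

import Mathlib

open Filter Topology

namespace GTP

noncomputable section

/-- Addition on `[-∞, ∞]` with the convention `∞ + (-∞) = (-∞) + ∞ = ∞`
(Mathlib's `+` on `EReal` has `⊤ + ⊥ = ⊥` instead, and agrees with this one otherwise). -/
def upAdd (a b : EReal) : EReal := if a = ⊤ ∨ b = ⊤ then ⊤ else a + b

/-- An *outer probability content* on a type `Y`: a functional on all
`EReal`-valued functions that is monotone, positively homogeneous,
subadditive (for `upAdd`), and maps real constants to themselves. -/
def IsOPC {Y : Type*} (E : (Y → EReal) → EReal) : Prop :=
  (∀ f g : Y → EReal, (∀ y, f y ≤ g y) → E f ≤ E g) ∧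
  (∀ c : ℝ, 0 < c → ∀ f : Y → EReal,
    E (fun y => (c : EReal) * f y) = (c : EReal) * E f) ∧
  (∀ f g : Y → EReal, E (fun y => upAdd (f y) (g y)) ≤ upAdd (E f) (E g)) ∧
  (∀ c : ℝ, E (fun _ => (c : EReal)) = (c : EReal))

/-- The length-`n` prefix `ω^n` of a sequence `ω ∈ Ω = X^∞`. -/
def pre {X : Type*} (ω : ℕ → X) (n : ℕ) : List X := List.ofFn fun i : Fin n => ω i

/-- `Γ(s)`: the set of infinite extensions of the situation `s`. -/
def Gamma {X : Type*} (s : List X) : Set (ℕ → X) := {ω | pre ω s.length = s}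

/-- A *supermartingale* with respect to the outer probability contents
`E_1, E_2, …`, indexed here from zero: `E n` stands for `E_{n+1}` and
governs the trial played in situations of length `n`. -/
def IsSupermartingale {X : Type*} (E : ℕ → (X → EReal) → EReal) (S : List X → EReal) : Prop :=
  ∀ s : List X, E s.length (fun x => S (s ++ [x])) ≤ S s

/-- A function to `EReal` bounded below by a real constant. -/
def BddBelowFn {Y : Type*} (S : Y → EReal) : Prop := ∃ c : ℝ, ∀ t, (c : EReal) ≤ S t

/-- The conditional upper expectation `Ē(ξ | s)`. -/
def upExp {X : Type*} (E : ℕ → (X → EReal) → EReal) (ξ : (ℕ → X) → EReal) (s : List X) : EReal :=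
  sInf {a | ∃ S : List X → EReal, IsSupermartingale E S ∧ BddBelowFn S ∧
    (∀ ω ∈ Gamma s, ξ ω ≤ liminf (fun n => S (pre ω n)) atTop) ∧ S s = a}

end

end GTP

/-!
Superhedging prices inherit monotonicity, homogeneity and subadditivity from the supermartingales
behind them: bounded below supermartingales form a convex cone, and `liminf` is superadditive on
sequences bounded below. A constant is superhedged by itself. That it cannot be superhedged for less
is where the normalization of the one-step contents enters: if `S t < r`, then `S (t ++ [x]) < r`
for some `x`, since otherwise `r = E r ≤ E (S (t ++ [·])) ≤ S t`. Iterating from `s` gives a path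
through `s` along which `S` stays below `r`, so `S s` is at least the infimum of the hedged function
over `Γ(s)`.
-/

namespace GTP

section UpAdd

variable {a b c d : EReal}

theorem upAdd_of_ne_top (ha : a ≠ ⊤) (hb : b ≠ ⊤) : upAdd a b = a + b :=
  if_neg (not_or.2 ⟨ha, hb⟩)

theorem upAdd_of_ne_bot (ha : a ≠ ⊥) (hb : b ≠ ⊥) : upAdd a b = a + b := by
  unfold upAdd
  split_ifs with h
  · rcases h with rfl | rfl
    · rw [EReal.top_add_of_ne_bot hb]
    · rw [EReal.add_top_of_ne_bot ha]
  · rfl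

theorem add_le_upAdd (a b : EReal) : a + b ≤ upAdd a b := by
  unfold upAdd
  split_ifs
  · exact le_top
  · exact le_rfl

theorem upAdd_le_upAdd (hac : a ≤ c) (hbd : b ≤ d) : upAdd a b ≤ upAdd c d := by
  by_cases h : c = ⊤ ∨ d = ⊤
  · exact le_top.trans_eq (if_pos h).symm
  · obtain ⟨hc, hd⟩ := not_or.1 h
    rw [upAdd_of_ne_top (ne_top_of_le_ne_top hc hac) (ne_top_of_le_ne_top hd hbd),
      upAdd_of_ne_top hc hd]
    exact add_le_add hac hbd

theorem le_upAdd_of_forall_gt (h : ∀ a' > a, ∀ b' > b, c ≤ upAdd a' b') : c ≤ upAdd a b := by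
  by_cases htop : a = ⊤ ∨ b = ⊤
  · exact le_top.trans_eq (if_pos htop).symm
  · obtain ⟨ha, hb⟩ := not_or.1 htop
    rw [upAdd_of_ne_top ha hb]
    refine EReal.le_add_of_forall_gt (.inr hb) (.inl ha) fun a' ha' b' hb' => ?_
    rw [← upAdd_of_ne_bot (ne_bot_of_gt ha') (ne_bot_of_gt hb')]
    exact h a' ha' b' hb'

theorem upAdd_liminf_le_liminf_upAdd {ι : Type*} {l : Filter ι} {u v : ι → EReal}
    (hu : liminf u l ≠ ⊥) (hv : liminf v l ≠ ⊥) :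
    upAdd (liminf u l) (liminf v l) ≤ liminf (fun i => upAdd (u i) (v i)) l :=
  calc upAdd (liminf u l) (liminf v l)
      = liminf u l + liminf v l := upAdd_of_ne_bot hu hv
    _ ≤ liminf (u + v) l := EReal.le_liminf_add
    _ ≤ liminf (fun i => upAdd (u i) (v i)) l :=
        liminf_le_liminf (.of_forall fun i => add_le_upAdd (u i) (v i))

end UpAdd

theorem coe_inv_mul_cancel_left {c : ℝ} (hc : c ≠ 0) (a : EReal) :
    ((c⁻¹ : ℝ) : EReal) * (c * a) = a := by
  rw [← mul_assoc, ← EReal.coe_mul, inv_mul_cancel₀ hc, EReal.coe_one, one_mul]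

namespace IsOPC

variable {Y : Type*} {F : (Y → EReal) → EReal}

theorem mono (hF : IsOPC F) {f g : Y → EReal} (h : ∀ y, f y ≤ g y) : F f ≤ F g :=
  hF.1 f g h

theorem map_const_mul (hF : IsOPC F) {c : ℝ} (hc : 0 < c) (f : Y → EReal) :
    F (fun y => c * f y) = c * F f :=
  hF.2.1 c hc f

theorem map_upAdd_le (hF : IsOPC F) (f g : Y → EReal) :
    F (fun y => upAdd (f y) (g y)) ≤ upAdd (F f) (F g) :=
  hF.2.2.1 f g

theorem map_const (hF : IsOPC F) (c : ℝ) : F (fun _ => c) = c :=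
  hF.2.2.2 c

theorem exists_lt_of_map_lt (hF : IsOPC F) {f : Y → EReal} {r : ℝ} (h : F f < r) :
    ∃ y, f y < r := by
  by_contra! hle
  have hr : (r : EReal) ≤ F f := (hF.map_const r).symm.trans_le (hF.mono hle)
  exact hr.not_gt h

end IsOPC

namespace BddBelowFn

variable {Y : Type*} {S T : Y → EReal}

theorem const (c : ℝ) : BddBelowFn fun _ : Y => (c : EReal) :=
  ⟨c, fun _ => le_rfl⟩

theorem const_mul (hS : BddBelowFn S) {c : ℝ} (hc : 0 ≤ c) :
    BddBelowFn fun t => (c : EReal) * S t := by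
  obtain ⟨m, hm⟩ := hS
  refine ⟨c * m, fun t => ?_⟩
  rw [EReal.coe_mul]
  exact mul_le_mul_of_nonneg_left (hm t) (EReal.coe_nonneg.2 hc)

theorem upAdd (hS : BddBelowFn S) (hT : BddBelowFn T) :
    BddBelowFn fun t => upAdd (S t) (T t) := by
  obtain ⟨m, hm⟩ := hS
  obtain ⟨k, hk⟩ := hT
  refine ⟨m + k, fun t => ?_⟩
  rw [EReal.coe_add]
  exact (add_le_add (hm t) (hk t)).trans (add_le_upAdd _ _)

theorem liminf_ne_bot (hS : BddBelowFn S) {ι : Type*} (l : Filter ι) (u : ι → Y) :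
    liminf (fun i => S (u i)) l ≠ ⊥ := by
  obtain ⟨m, hm⟩ := hS
  have hle : (m : EReal) ≤ liminf (fun i => S (u i)) l :=
    le_liminf_of_le (by isBoundedDefault) (.of_forall fun i => hm (u i))
  exact ne_bot_of_le_ne_bot (EReal.coe_ne_bot m) hle

end BddBelowFn

section Path

variable {X : Type*}

theorem pre_succ (ω : ℕ → X) (n : ℕ) : pre ω (n + 1) = pre ω n ++ [ω n] :=
  List.ofFn_succ_last

theorem exists_pre_length_add_eq (L : ℕ → List X) (x : ℕ → X)
    (hL : ∀ n, L (n + 1) = L n ++ [x n]) : ∃ ω, ∀ n, pre ω ((L 0).length + n) = L n := by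
  let ω : ℕ → X := fun i => if h : i < (L 0).length then (L 0)[i] else x (i - (L 0).length)
  have hω_add (n : ℕ) : ω ((L 0).length + n) = x n := by simp [ω]
  refine ⟨ω, fun n => ?_⟩
  induction n with
  | zero => simp [pre, ω]
  | succ n ih => rw [← add_assoc, pre_succ, ih, hω_add, hL]

theorem exists_mem_Gamma_forall_pre {p : List X → Prop} {s : List X} (hs : p s)
    (hstep : ∀ t, p t → ∃ x, p (t ++ [x])) :
    ∃ ω ∈ Gamma s, ∀ n, s.length ≤ n → p (pre ω n) := by
  choose next hnext using hstep
  let L : ℕ → {t // p t} := fun n => (fun t => ⟨t ++ [next t t.2], hnext t t.2⟩)^[n] ⟨s, hs⟩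
  obtain ⟨ω, hω⟩ := exists_pre_length_add_eq (fun n => (L n).1) (fun n => next (L n) (L n).2)
    fun n => by simp only [L, Function.iterate_succ_apply']
  refine ⟨ω, hω 0, fun n hn => ?_⟩
  obtain ⟨k, rfl⟩ := Nat.exists_eq_add_of_le hn
  exact (hω k).symm ▸ (L k).2

end Path

variable {X : Type*} {E : ℕ → (X → EReal) → EReal}

namespace IsSupermartingale

variable {S T : List X → EReal}

theorem const (hE : ∀ n, IsOPC (E n)) (c : ℝ) : IsSupermartingale E fun _ => (c : EReal) :=
  fun t => ((hE t.length).map_const c).le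

theorem const_mul (hE : ∀ n, IsOPC (E n)) (hS : IsSupermartingale E S) {c : ℝ} (hc : 0 < c) :
    IsSupermartingale E fun t => (c : EReal) * S t := by
  intro t
  rw [(hE t.length).map_const_mul hc]
  exact mul_le_mul_of_nonneg_left (hS t) (EReal.coe_nonneg.2 hc.le)

theorem upAdd (hE : ∀ n, IsOPC (E n)) (hS : IsSupermartingale E S)
    (hT : IsSupermartingale E T) : IsSupermartingale E fun t => upAdd (S t) (T t) :=
  fun t => ((hE t.length).map_upAdd_le _ _).trans (upAdd_le_upAdd (hS t) (hT t))

theorem exists_path_lt (hE : ∀ n, IsOPC (E n)) (hS : IsSupermartingale E S) {s : List X} {r : ℝ}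
    (hr : S s < r) : ∃ ω ∈ Gamma s, ∀ n, s.length ≤ n → S (pre ω n) < r :=
  exists_mem_Gamma_forall_pre hr fun t ht =>
    (hE t.length).exists_lt_of_map_lt ((hS t).trans_lt ht)

theorem exists_liminf_le (hE : ∀ n, IsOPC (E n)) (hS : IsSupermartingale E S) {s : List X}
    {r : ℝ} (hr : S s < r) : ∃ ω ∈ Gamma s, liminf (fun n => S (pre ω n)) atTop ≤ r := by
  obtain ⟨ω, hω, hlt⟩ := hS.exists_path_lt hE hr
  have hle : ∀ᶠ n in atTop, S (pre ω n) ≤ r :=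
    eventually_atTop.2 ⟨s.length, fun n hn => (hlt n hn).le⟩
  exact ⟨ω, hω, liminf_le_of_frequently_le' hle.frequently⟩

end IsSupermartingale

/-- The supermartingales admitted in the definition of `Ē(ξ | s)`: those that are bounded below and
whose `liminf` dominates `ξ` on `Γ(s)`, so that capital `S s` suffices to hedge `ξ` from `s` on. -/
structure IsSuperhedge (E : ℕ → (X → EReal) → EReal) (ξ : (ℕ → X) → EReal) (s : List X)
    (S : List X → EReal) : Prop where
  isSupermartingale : IsSupermartingale E S
  bddBelowFn : BddBelowFn S
  le_liminf : ∀ ω ∈ Gamma s, ξ ω ≤ liminf (fun n => S (pre ω n)) atTop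

namespace IsSuperhedge

variable {ξ η : (ℕ → X) → EReal} {s : List X} {S T : List X → EReal}

theorem mono (hS : IsSuperhedge E η s S) (h : ∀ ω ∈ Gamma s, ξ ω ≤ η ω) :
    IsSuperhedge E ξ s S where
  isSupermartingale := hS.isSupermartingale
  bddBelowFn := hS.bddBelowFn
  le_liminf ω hω := (h ω hω).trans (hS.le_liminf ω hω)

theorem const (hE : ∀ n, IsOPC (E n)) (c : ℝ) (s : List X) :
    IsSuperhedge E (fun _ => c) s fun _ => c where
  isSupermartingale := .const hE c
  bddBelowFn := .const c
  le_liminf _ _ := (liminf_const _).ge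

theorem const_mul (hE : ∀ n, IsOPC (E n)) (hS : IsSuperhedge E ξ s S) {c : ℝ} (hc : 0 < c) :
    IsSuperhedge E (fun ω => c * ξ ω) s fun t => c * S t where
  isSupermartingale := hS.isSupermartingale.const_mul hE hc
  bddBelowFn := hS.bddBelowFn.const_mul hc.le
  le_liminf ω hω := by
    have hc₀ : (0 : EReal) ≤ c := EReal.coe_nonneg.2 hc.le
    rw [EReal.liminf_const_mul_of_nonneg_of_ne_top hc₀ (EReal.coe_ne_top c)]
    exact mul_le_mul_of_nonneg_left (hS.le_liminf ω hω) hc₀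

theorem upAdd (hE : ∀ n, IsOPC (E n)) (hS : IsSuperhedge E ξ s S) (hT : IsSuperhedge E η s T) :
    IsSuperhedge E (fun ω => upAdd (ξ ω) (η ω)) s fun t => upAdd (S t) (T t) where
  isSupermartingale := hS.isSupermartingale.upAdd hE hT.isSupermartingale
  bddBelowFn := hS.bddBelowFn.upAdd hT.bddBelowFn
  le_liminf ω hω :=
    (upAdd_le_upAdd (hS.le_liminf ω hω) (hT.le_liminf ω hω)).trans <|
      upAdd_liminf_le_liminf_upAdd (hS.bddBelowFn.liminf_ne_bot _ _)
        (hT.bddBelowFn.liminf_ne_bot _ _)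

theorem iInf_le (hE : ∀ n, IsOPC (E n)) (hS : IsSuperhedge E ξ s S) :
    ⨅ ω ∈ Gamma s, ξ ω ≤ S s := by
  by_contra! hlt
  obtain ⟨r, hSr, hr⟩ := EReal.lt_iff_exists_real_btwn.1 hlt
  obtain ⟨ω, hω, hle⟩ := hS.isSupermartingale.exists_liminf_le hE hSr
  have hξ : ⨅ ω ∈ Gamma s, ξ ω ≤ r :=
    (iInf₂_le ω hω).trans ((hS.le_liminf ω hω).trans hle)
  exact hξ.not_gt hr

theorem upExp_le (hS : IsSuperhedge E ξ s S) : upExp E ξ s ≤ S s :=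
  sInf_le ⟨S, hS.isSupermartingale, hS.bddBelowFn, hS.le_liminf, rfl⟩

end IsSuperhedge

section UpExp

variable {ξ η : (ℕ → X) → EReal} {s : List X} {a : EReal}

theorem le_upExp (h : ∀ S, IsSuperhedge E ξ s S → a ≤ S s) : a ≤ upExp E ξ s := by
  refine le_sInf ?_
  rintro _ ⟨S, hS, hSb, hξ, rfl⟩
  exact h S ⟨hS, hSb, hξ⟩

theorem exists_isSuperhedge_lt (h : upExp E ξ s < a) : ∃ S, IsSuperhedge E ξ s S ∧ S s < a := by
  contrapose! h
  exact le_upExp h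

theorem upExp_mono (h : ∀ ω ∈ Gamma s, ξ ω ≤ η ω) : upExp E ξ s ≤ upExp E η s :=
  le_upExp fun _ hS => (hS.mono h).upExp_le

theorem upExp_const_mul_le (hE : ∀ n, IsOPC (E n)) {c : ℝ} (hc : 0 < c)
    (ξ : (ℕ → X) → EReal) (s : List X) :
    upExp E (fun ω => c * ξ ω) s ≤ c * upExp E ξ s := by
  have hc₀ : (0 : EReal) < c := EReal.coe_pos.2 hc
  rw [← EReal.div_le_iff_le_mul hc₀ (EReal.coe_ne_top c)]
  refine le_upExp fun S hS => ?_
  rw [EReal.div_le_iff_le_mul hc₀ (EReal.coe_ne_top c)]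
  exact (hS.const_mul hE hc).upExp_le

theorem upExp_const_mul (hE : ∀ n, IsOPC (E n)) {c : ℝ} (hc : 0 < c)
    (ξ : (ℕ → X) → EReal) (s : List X) :
    upExp E (fun ω => c * ξ ω) s = c * upExp E ξ s := by
  refine (upExp_const_mul_le hE hc ξ s).antisymm ?_
  have hξ : upExp E ξ s ≤ (c⁻¹ : ℝ) * upExp E (fun ω => c * ξ ω) s := by
    simpa only [coe_inv_mul_cancel_left hc.ne'] using
      upExp_const_mul_le hE (inv_pos.2 hc) (fun ω => c * ξ ω) s
  calc c * upExp E ξ s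
      ≤ c * ((c⁻¹ : ℝ) * upExp E (fun ω => c * ξ ω) s) :=
        mul_le_mul_of_nonneg_left hξ (EReal.coe_nonneg.2 hc.le)
    _ = upExp E (fun ω => c * ξ ω) s := by
        simpa only [inv_inv] using coe_inv_mul_cancel_left (inv_ne_zero hc.ne') _

theorem upExp_upAdd_le (hE : ∀ n, IsOPC (E n)) (ξ η : (ℕ → X) → EReal) (s : List X) :
    upExp E (fun ω => upAdd (ξ ω) (η ω)) s ≤ upAdd (upExp E ξ s) (upExp E η s) := by
  refine le_upAdd_of_forall_gt fun a ha b hb => ?_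
  obtain ⟨S, hS, hSa⟩ := exists_isSuperhedge_lt ha
  obtain ⟨T, hT, hTb⟩ := exists_isSuperhedge_lt hb
  exact (hS.upAdd hE hT).upExp_le.trans (upAdd_le_upAdd hSa.le hTb.le)

theorem iInf_le_upExp (hE : ∀ n, IsOPC (E n)) (ξ : (ℕ → X) → EReal) (s : List X) :
    ⨅ ω ∈ Gamma s, ξ ω ≤ upExp E ξ s :=
  le_upExp fun _ hS => hS.iInf_le hE

theorem upExp_const (hE : ∀ n, IsOPC (E n)) (c : ℝ) (s : List X) :
    upExp E (fun _ => c) s = c :=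
  (IsSuperhedge.const hE c s).upExp_le.antisymm <|
    (le_iInf₂ fun _ _ => le_rfl).trans (iInf_le_upExp hE _ s)

end UpExp

end GTP

/-- For every situation `s`, the functional `ξ ↦ Ē(ξ | s)` is an outer
probability content on `Ω = X^∞`. -/
theorem upExp_isOPC {X : Type*} [Nonempty X]
    (E : ℕ → (X → EReal) → EReal) (hE : ∀ n, GTP.IsOPC (E n)) (s : List X) :
    GTP.IsOPC (fun ξ : (ℕ → X) → EReal => GTP.upExp E ξ s) :=
  ⟨fun _ _ h => GTP.upExp_mono fun ω _ => h ω,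
    fun _ hc ξ => GTP.upExp_const_mul hE hc ξ s,
    fun ξ η => GTP.upExp_upAdd_le hE ξ η s,
    fun c => GTP.upExp_const hE c s⟩
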